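/- arXiv:1407.7347 — 2 statements merged into one kernel-verified Lean document; each statement's English description precedes it below -/
import Mathlib

section
/- Assume g_{ij}^{kl} ∈ ℝ for 0 ≤ i,j,k,l ≤ 2 with g_{ij}^{kl} = g_{ij}^{lk} and g_{ij}^{kl} = g_{ji}^{kl}, and Σ_{i,j,k,l=0}^2 g_{ij}^{kl} p_i p_j p_k p_l = 0 for every p = (p₀,p₁,p₂) ∈ ℝ³ satisfying p₀² = p₁² + p₂². Then there exists a constant C > 0 (depending only on the g_{ij}^{kl}) such that for all T > 0, all f, g, h ∈ C^∞([0,T]×ℝ²), and all (t,x) ∈ [0,T]×ℝ² with x ≠ 0: |Σ_{i,j,k,l=0}^2 g_{ij}^{kl}(∂_i f ∂_j g ∂²_{kl} h)(t,x)| ≤ C(|∂f(t,x)||∂g(t,x)||Z∂h(t,x)| + |∂f(t,x)||Zg(t,x)||∂²h(t,x)| + |Zf(t,x)||∂g(t,x)||∂²h(t,x)|). -/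
/-!
At a point with `x ≠ 0`, let `ω = (1, -x₁/|x|, -x₂/|x|)`, a null covector with entries bounded
by `1`. By definition of `Z`, `∂ᵢ = Zᵢ + ωᵢ ∂ₜ` with the convention `Z₀ = 0`. Hence `∂f` and `∂g`
differ from `∂ₜf ω` and `∂ₜg ω` by `Zf` and `Zg`, and, since second derivatives commute, `∂²h`
differs from `∂ₜ²h ω ⊗ ω` by `Zᵢ∂ⱼh + ωᵢ Zⱼ∂ₜh`. Replacing the three arguments of the trilinear
form one at a time, each replacement costs a product with one factor `Z`, and what is left is
`∂ₜf ∂ₜg ∂ₜ²h` times the quartic form at `ω`, which vanishes.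
-/

noncomputable section

open Real MeasureTheory Set

/-- A function of time `t` and space `(x, y)`. -/
abbrev F3 : Type := ℝ → ℝ → ℝ → ℝ

/-- Partial derivative in time. -/
def pt (f : F3) : F3 := fun t x y => deriv (fun s => f s x y) t
/-- Partial derivative in the first space variable. -/
def px (f : F3) : F3 := fun t x y => deriv (fun s => f t s y) x
/-- Partial derivative in the second space variable. -/
def py (f : F3) : F3 := fun t x y => deriv (fun s => f t x s) y

/-- `∂ = (∂_t, ∂_1, ∂_2)`. -/
def pdi : Fin 3 → F3 → F3 := ![pt, px, py]

/-- The scaling field `X = t∂_t + x₁∂₁ + x₂∂₂`. -/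
def Xf (f : F3) : F3 := fun t x y => t * pt f t x y + x * px f t x y + y * py f t x y
/-- The rotation field `Ω = x₁∂₂ − x₂∂₁`. -/
def Om (f : F3) : F3 := fun t x y => x * py f t x y - y * px f t x y
/-- The Lorentz boost `L₁ = t∂₁ + x₁∂_t`. -/
def L1f (f : F3) : F3 := fun t x y => t * px f t x y + x * pt f t x y
/-- The Lorentz boost `L₂ = t∂₂ + x₂∂_t`. -/
def L2f (f : F3) : F3 := fun t x y => t * py f t x y + y * pt f t x y

/-- The family `Γ = (∂_t, ∂_1, ∂_2, X)`. -/
def GammaF : Fin 4 → F3 → F3 := ![pt, px, py, Xf]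

/-- Iterated composition `Γ^α` over a word `α`. -/
def GIter : List (Fin 4) → F3 → F3
  | [], f => f
  | a :: l, f => GammaF a (GIter l f)

/-- The family `Λ = (∂_t, ∂_1, ∂_2, Ω, X, L₁, L₂)`. -/
def LamF : Fin 7 → F3 → F3 := ![pt, px, py, Om, Xf, L1f, L2f]

/-- Iterated composition `Λ^α` over a word `α`. -/
def LIter : List (Fin 7) → F3 → F3
  | [], f => f
  | a :: l, f => LamF a (LIter l f)

/-- Iterated composition `∂^β` over a word `β`. -/
def PIter : List (Fin 3) → F3 → F3
  | [], f => f
  | a :: l, f => pdi a (PIter l f)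

/-- `r = |x|`. -/
def rad (x y : ℝ) : ℝ := Real.sqrt (x ^ 2 + y ^ 2)
/-- `σ₋(t,x) = 1 + |t − |x||`. -/
def sm (t x y : ℝ) : ℝ := 1 + |t - rad x y|
/-- `σ₊(t,x) = 1 + t + |x|`. -/
def sp (t x y : ℝ) : ℝ := 1 + t + rad x y

/-- `f` is a `C^∞` function of `(t, x)`. -/
def Smooth3 (f : F3) : Prop := ContDiff ℝ (⊤ : ℕ∞) (fun p : ℝ × ℝ × ℝ => f p.1 p.2.1 p.2.2)

/-- `Z₁ = ∂₁ + (x₁/|x|)∂_t`. -/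
def Z1 (f : F3) : F3 := fun t x y => px f t x y + (x / rad x y) * pt f t x y
/-- `Z₂ = ∂₂ + (x₂/|x|)∂_t`. -/
def Z2 (f : F3) : F3 := fun t x y => py f t x y + (y / rad x y) * pt f t x y
/-- The family `Z = (Z₁, Z₂)`. -/
def Zi : Fin 2 → F3 → F3 := ![Z1, Z2]

/-- `f` is radially symmetric in the space variables. -/
def RadialF (f : F3) : Prop := ∀ t x y x' y', rad x y = rad x' y' → f t x y = f t x' y'

-- Instance search for the norm on triply nested spaces of continuous linear maps needs this depth.
set_option maxSynthPendingDepth 3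

section Trilinear

variable {𝕜 U V W E : Type*} [NontriviallyNormedField 𝕜]
  [SeminormedAddCommGroup U] [NormedSpace 𝕜 U] [SeminormedAddCommGroup V] [NormedSpace 𝕜 V]
  [SeminormedAddCommGroup W] [NormedSpace 𝕜 W] [SeminormedAddCommGroup E] [NormedSpace 𝕜 E]

lemma norm_trilinear_apply_le (T : U →L[𝕜] V →L[𝕜] W →L[𝕜] E) (u : U) (v : V) (w : W) :
    ‖T u v w‖ ≤ ‖T‖ * (‖u‖ * ‖v‖ * ‖w‖) :=
  calc ‖T u v w‖ ≤ ‖T u‖ * ‖v‖ * ‖w‖ := (T u).le_opNorm₂ v w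
    _ ≤ ‖T‖ * ‖u‖ * ‖v‖ * ‖w‖ := by gcongr; exact T.le_opNorm u
    _ = ‖T‖ * (‖u‖ * ‖v‖ * ‖w‖) := by ring

lemma norm_trilinear_apply_le_of_apply_eq_zero (T : U →L[𝕜] V →L[𝕜] W →L[𝕜] E)
    {u₀ : U} {v₀ : V} {w₀ : W} (h₀ : T u₀ v₀ w₀ = 0) (u : U) (v : V) (w : W) :
    ‖T u v w‖ ≤ ‖T‖ * (‖u₀‖ * ‖v₀‖ * ‖w - w₀‖ + ‖u₀‖ * ‖v - v₀‖ * ‖w‖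
      + ‖u - u₀‖ * ‖v‖ * ‖w‖) := by
  have telescope : T u v w = T u₀ v₀ (w - w₀) + T u₀ (v - v₀) w + T (u - u₀) v w := by
    simp only [map_sub, sub_apply, h₀]
    abel
  rw [telescope, mul_add, mul_add]
  refine norm_add₃_le.trans ?_
  gcongr <;> exact norm_trilinear_apply_le T _ _ _

end Trilinear

section FiniteIndex

variable {ι : Type*} [Fintype ι]

lemma pi_norm_eq_iSup_norm {E : ι → Type*} [∀ i, SeminormedAddGroup (E i)] (v : ∀ i, E i) :
    ‖v‖ = ⨆ i, ‖v i‖ := by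
  refine le_antisymm ?_ (Real.iSup_le (norm_le_pi_norm v) (norm_nonneg v))
  exact (pi_norm_le_iff_of_nonneg (Real.iSup_nonneg fun i => norm_nonneg (v i))).2
    (le_ciSup (finite_range fun i => ‖v i‖).bddAbove)

/-- The rank-one matrix `w ⊗ w`. Matrices are indexed by pairs, so that their norm is the supremum
of the norms of all entries. -/
def tensorSquare {κ R : Type*} [Mul R] (w : κ → R) : κ × κ → R := fun p => w p.1 * w p.2

lemma norm_sub_smul_tensorSquare_le {𝕜 : Type*} [NormedField 𝕜] {K : ι × ι → 𝕜}
    (hK : ∀ i j, K (i, j) = K (j, i)) {w : ι → 𝕜} (hw : ‖w‖ ≤ 1) {o : ι} {M : ℝ}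
    (hM : ∀ i j, ‖K (i, j) - w i * K (o, j)‖ ≤ M) :
    ‖K - K (o, o) • tensorSquare w‖ ≤ 2 * M := by
  have M_nonneg : 0 ≤ M := (norm_nonneg _).trans (hM o o)
  refine (pi_norm_le_iff_of_nonneg (by positivity)).2 fun ⟨i, j⟩ => ?_
  have norm_w_le : ‖w i‖ ≤ 1 := (norm_le_pi_norm w i).trans hw
  calc ‖K (i, j) - K (o, o) * (w i * w j)‖
      = ‖(K (i, j) - w i * K (o, j)) + w i * (K (j, o) - w j * K (o, o))‖ := by
        rw [hK j o]
        ring_nf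
    _ ≤ ‖K (i, j) - w i * K (o, j)‖ + ‖w i‖ * ‖K (j, o) - w j * K (o, o)‖ := by
        rw [← norm_mul]
        exact norm_add_le _ _
    _ ≤ M + 1 * M := by
        gcongr
        exacts [hM i j, hM j o]
    _ = 2 * M := by ring

/-- The trilinear form `(a, b, c) ↦ ∑ g i j k l * a i * b j * c (k, l)`, of which a quartic form
with coefficients `g` is the restriction to `a = b = p`, `c = p ⊗ p`. -/
def quarticForm {𝕜 : Type*} [NontriviallyNormedField 𝕜] (g : ι → ι → ι → ι → 𝕜) :
    (ι → 𝕜) →L[𝕜] (ι → 𝕜) →L[𝕜] (ι × ι → 𝕜) →L[𝕜] 𝕜 :=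
  ∑ i, ∑ j, ∑ k, ∑ l, g i j k l •
    (ContinuousLinearMap.proj i).smulRight
      ((ContinuousLinearMap.proj j).smulRight (ContinuousLinearMap.proj (k, l)))

lemma quarticForm_apply {𝕜 : Type*} [NontriviallyNormedField 𝕜] (g : ι → ι → ι → ι → 𝕜)
    (a b : ι → 𝕜) (c : ι × ι → 𝕜) :
    quarticForm g a b c = ∑ i, ∑ j, ∑ k, ∑ l, g i j k l * a i * b j * c (k, l) := by
  simp [quarticForm, mul_assoc]

end FiniteIndex

section PartialDerivatives

open scoped Topology

/-- The standard basis of `ℝ × ℝ × ℝ`, the directions of the derivatives `pdi`. -/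
def stdVec : Fin 3 → ℝ × ℝ × ℝ := ![(1, 0, 0), (0, 1, 0), (0, 0, 1)]

variable {f : F3} {t x y : ℝ}

lemma pdi_eq_fderiv (hf : DifferentiableAt ℝ ↿f (t, x, y)) (i : Fin 3) :
    pdi i f t x y = fderiv ℝ ↿f (t, x, y) (stdVec i) := by
  fin_cases i
  · have line : HasDerivAt (fun s : ℝ => (s, x, y)) (1, 0, 0) t :=
      (hasDerivAt_id t).prodMk ((hasDerivAt_const t x).prodMk (hasDerivAt_const t y))
    exact (hf.hasFDerivAt.comp_hasDerivAt t line).deriv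
  · have line : HasDerivAt (fun s : ℝ => (t, s, y)) (0, 1, 0) x :=
      (hasDerivAt_const x t).prodMk ((hasDerivAt_id x).prodMk (hasDerivAt_const x y))
    exact (hf.hasFDerivAt.comp_hasDerivAt x line).deriv
  · have line : HasDerivAt (fun s : ℝ => (t, x, s)) (0, 0, 1) y :=
      (hasDerivAt_const y t).prodMk ((hasDerivAt_const y x).prodMk (hasDerivAt_id y))
    exact (hf.hasFDerivAt.comp_hasDerivAt y line).deriv

lemma pdi_pdi_eq_fderiv_fderiv (hf : ContDiffAt ℝ 2 ↿f (t, x, y)) (i j : Fin 3) :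
    pdi i (pdi j f) t x y = fderiv ℝ (fderiv ℝ ↿f) (t, x, y) (stdVec i) (stdVec j) := by
  have fderiv_diff : DifferentiableAt ℝ (fderiv ℝ ↿f) (t, x, y) :=
    (hf.fderiv_right (m := 1) (by norm_num)).differentiableAt one_ne_zero
  have pdi_near : ↿(pdi j f) =ᶠ[𝓝 (t, x, y)] fun p => fderiv ℝ ↿f p (stdVec j) := by
    filter_upwards [hf.eventually (by simp)] with p hp
    exact pdi_eq_fderiv (hp.differentiableAt two_ne_zero) j
  have pdi_diff : HasFDerivAt ↿(pdi j f) ((fderiv ℝ (fderiv ℝ ↿f) (t, x, y)).flip (stdVec j))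
      (t, x, y) := by
    refine HasFDerivAt.congr_of_eventuallyEq ?_ pdi_near
    simpa using fderiv_diff.hasFDerivAt.clm_apply (hasFDerivAt_const (stdVec j) (t, x, y))
  rw [pdi_eq_fderiv pdi_diff.differentiableAt, pdi_diff.fderiv, ContinuousLinearMap.flip_apply]

lemma pdi_comm (hf : ContDiffAt ℝ 2 ↿f (t, x, y)) (i j : Fin 3) :
    pdi i (pdi j f) t x y = pdi j (pdi i f) t x y := by
  rw [pdi_pdi_eq_fderiv_fderiv hf, pdi_pdi_eq_fderiv_fderiv hf]
  exact (hf.isSymmSndFDerivAt (by simp)).eq _ _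

end PartialDerivatives

section NullCovector

/-- `p` lies on the light cone `p₀² = p₁² + p₂²`, on which the quartic form is assumed to vanish. -/
def IsNullCovector (p : Fin 3 → ℝ) : Prop := p 0 ^ 2 = p 1 ^ 2 + p 2 ^ 2

lemma IsNullCovector.abs_le_abs_zero {p : Fin 3 → ℝ} (hp : IsNullCovector p) (i : Fin 3) :
    |p i| ≤ |p 0| := by
  rw [← sq_le_sq]
  match i with
  | 0 => exact le_rfl
  | 1 => exact hp ▸ le_add_of_nonneg_right (sq_nonneg (p 2))
  | 2 => exact hp ▸ le_add_of_nonneg_left (sq_nonneg (p 1))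

/-- The covector `(1, -x/r, -y/r)`, conormal to the outgoing light cone through a point over
`(x, y)`. -/
def nullCovector (x y : ℝ) : Fin 3 → ℝ := ![1, -(x / rad x y), -(y / rad x y)]

lemma isNullCovector_nullCovector {x y : ℝ} (hxy : (x, y) ≠ (0, 0)) :
    IsNullCovector (nullCovector x y) := by
  have rad_sq : rad x y ^ 2 = x ^ 2 + y ^ 2 := Real.sq_sqrt (by positivity)
  have sum_sq_ne_zero : x ^ 2 + y ^ 2 ≠ 0 := by
    simpa only [ne_eq, sq, mul_self_add_mul_self_eq_zero, Prod.mk.injEq] using hxy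
  simp only [IsNullCovector, nullCovector, Matrix.cons_val, neg_sq, div_pow, rad_sq, one_pow]
  field_simp

lemma norm_nullCovector_le_one {x y : ℝ} (hxy : (x, y) ≠ (0, 0)) : ‖nullCovector x y‖ ≤ 1 :=
  (pi_norm_le_iff_of_nonneg zero_le_one).2 fun i => by
    simpa [nullCovector] using (isNullCovector_nullCovector hxy).abs_le_abs_zero i

end NullCovector

section GoodDerivatives

/-- The vector `∂f` at a point; its norm is `|∂f|`. -/
def partials (f : F3) (t x y : ℝ) : Fin 3 → ℝ := fun i => pdi i f t x y

/-- The matrix `∂²f` at a point, indexed by pairs so that its norm is `|∂²f|`. -/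
def secondPartials (f : F3) (t x y : ℝ) : Fin 3 × Fin 3 → ℝ := fun p => pdi p.1 (pdi p.2 f) t x y

/-- The vector `Zf` of derivatives tangent to the outgoing light cone; its norm is `|Zf|`. -/
def goodPartials (f : F3) (t x y : ℝ) : Fin 2 → ℝ := fun i => Zi i f t x y

/-- The matrix `Z∂f` at a point, indexed by pairs so that its norm is `|Z∂f|`. -/
def goodSecondPartials (f : F3) (t x y : ℝ) : Fin 2 × Fin 3 → ℝ :=
  fun p => Zi p.1 (pdi p.2 f) t x y

lemma pdi_succ_eq_Zi_add (f : F3) (t x y : ℝ) (i : Fin 2) :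
    pdi i.succ f t x y = Zi i f t x y + nullCovector x y i.succ * pdi 0 f t x y := by
  fin_cases i <;> simp [pdi, Zi, Z1, Z2, nullCovector]

lemma abs_pdi_sub_nullCovector_mul_le {f : F3} {t x y M : ℝ} (hM : ∀ i, |Zi i f t x y| ≤ M)
    (i : Fin 3) :
    |pdi i f t x y - nullCovector x y i * pdi 0 f t x y| ≤ M := by
  cases i using Fin.cases with
  | zero => simpa [nullCovector] using (abs_nonneg _).trans (hM 0)
  | succ i => simpa [pdi_succ_eq_Zi_add f t x y i] using hM i

lemma norm_partials_sub_smul_nullCovector_le (f : F3) (t x y : ℝ) :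
    ‖partials f t x y - pdi 0 f t x y • nullCovector x y‖ ≤ ‖goodPartials f t x y‖ :=
  (pi_norm_le_iff_of_nonneg (norm_nonneg _)).2 fun i => by
    simpa [partials, mul_comm] using
      abs_pdi_sub_nullCovector_mul_le (norm_le_pi_norm (goodPartials f t x y)) i

lemma norm_pdi_zero_smul_nullCovector_le (f : F3) (t : ℝ) {x y : ℝ} (hxy : (x, y) ≠ (0, 0)) :
    ‖pdi 0 f t x y • nullCovector x y‖ ≤ ‖partials f t x y‖ :=
  calc ‖pdi 0 f t x y • nullCovector x y‖ = ‖pdi 0 f t x y‖ * ‖nullCovector x y‖ := norm_smul _ _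
    _ ≤ ‖partials f t x y‖ * 1 := by
        gcongr
        exacts [norm_le_pi_norm (partials f t x y) 0, norm_nullCovector_le_one hxy]
    _ = ‖partials f t x y‖ := mul_one _

lemma norm_secondPartials_sub_smul_tensorSquare_le {k : F3} {t x y : ℝ}
    (hk : ContDiffAt ℝ 2 ↿k (t, x, y)) (hxy : (x, y) ≠ (0, 0)) :
    ‖secondPartials k t x y - pdi 0 (pdi 0 k) t x y • tensorSquare (nullCovector x y)‖ ≤
      2 * ‖goodSecondPartials k t x y‖ :=
  norm_sub_smul_tensorSquare_le (K := secondPartials k t x y) (pdi_comm hk)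
    (norm_nullCovector_le_one hxy)
    fun i j => abs_pdi_sub_nullCovector_mul_le
      (fun a => norm_le_pi_norm (goodSecondPartials k t x y) (a, j)) i

lemma norm_trilinear_partials_le_of_null {E : Type*} [SeminormedAddCommGroup E] [NormedSpace ℝ E]
    {T : (Fin 3 → ℝ) →L[ℝ] (Fin 3 → ℝ) →L[ℝ] (Fin 3 × Fin 3 → ℝ) →L[ℝ] E}
    (f h : F3) {k : F3} {t x y : ℝ} (hk : ContDiffAt ℝ 2 ↿k (t, x, y)) (hxy : (x, y) ≠ (0, 0))
    (hT : T (nullCovector x y) (nullCovector x y) (tensorSquare (nullCovector x y)) = 0) :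
    ‖T (partials f t x y) (partials h t x y) (secondPartials k t x y)‖ ≤
      2 * ‖T‖ * (‖partials f t x y‖ * ‖partials h t x y‖ * ‖goodSecondPartials k t x y‖
        + ‖partials f t x y‖ * ‖goodPartials h t x y‖ * ‖secondPartials k t x y‖
        + ‖goodPartials f t x y‖ * ‖partials h t x y‖ * ‖secondPartials k t x y‖) := by
  have vanishes : T (pdi 0 f t x y • nullCovector x y) (pdi 0 h t x y • nullCovector x y)
      (pdi 0 (pdi 0 k) t x y • tensorSquare (nullCovector x y)) = 0 := by
    simp only [map_smul, smul_apply, hT, smul_zero]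
  calc ‖T (partials f t x y) (partials h t x y) (secondPartials k t x y)‖
      ≤ ‖T‖ * (‖partials f t x y‖ * ‖partials h t x y‖ * (2 * ‖goodSecondPartials k t x y‖)
        + ‖partials f t x y‖ * ‖goodPartials h t x y‖ * ‖secondPartials k t x y‖
        + ‖goodPartials f t x y‖ * ‖partials h t x y‖ * ‖secondPartials k t x y‖) := by
        refine (norm_trilinear_apply_le_of_apply_eq_zero T vanishes _ _ _).trans ?_
        gcongr
        · exact norm_pdi_zero_smul_nullCovector_le f t hxy
        · exact norm_pdi_zero_smul_nullCovector_le h t hxy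
        · exact norm_secondPartials_sub_smul_tensorSquare_le hk hxy
        · exact norm_pdi_zero_smul_nullCovector_le f t hxy
        · exact norm_partials_sub_smul_nullCovector_le h t x y
        · exact norm_partials_sub_smul_nullCovector_le f t x y
    _ ≤ ‖T‖ * (2 * (‖partials f t x y‖ * ‖partials h t x y‖ * ‖goodSecondPartials k t x y‖
        + ‖partials f t x y‖ * ‖goodPartials h t x y‖ * ‖secondPartials k t x y‖
        + ‖goodPartials f t x y‖ * ‖partials h t x y‖ * ‖secondPartials k t x y‖)) := by
        rw [mul_add (2 : ℝ), mul_add (2 : ℝ), mul_left_comm _ (2 : ℝ)]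
        gcongr ‖T‖ * (_ + ?_ + ?_) <;> exact le_mul_of_one_le_left (by positivity) one_le_two
    _ = _ := by ring

end GoodDerivatives

theorem null_form_estimate_quartic_general (g : Fin 3 → Fin 3 → Fin 3 → Fin 3 → ℝ)
    (hnull : ∀ p : Fin 3 → ℝ, (p 0) ^ 2 = (p 1) ^ 2 + (p 2) ^ 2 →
      ∑ i, ∑ j, ∑ k, ∑ l, g i j k l * p i * p j * p k * p l = 0) :
    ∃ C > 0, ∀ (f h k : F3) (t x y : ℝ), DifferentiableAt ℝ ↿f (t, x, y) →
      DifferentiableAt ℝ ↿h (t, x, y) → ContDiffAt ℝ 2 ↿k (t, x, y) → (x, y) ≠ (0, 0) →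
        |∑ i, ∑ j, ∑ k', ∑ l,
            g i j k' l * pdi i f t x y * pdi j h t x y * pdi k' (pdi l k) t x y| ≤
          C * ((⨆ i : Fin 3, |pdi i f t x y|) * (⨆ i : Fin 3, |pdi i h t x y|) *
                (⨆ p : Fin 2 × Fin 3, |Zi p.1 (pdi p.2 k) t x y|)
            + (⨆ i : Fin 3, |pdi i f t x y|) * (⨆ i : Fin 2, |Zi i h t x y|) *
                (⨆ p : Fin 3 × Fin 3, |pdi p.1 (pdi p.2 k) t x y|)
            + (⨆ i : Fin 2, |Zi i f t x y|) * (⨆ i : Fin 3, |pdi i h t x y|) *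
                (⨆ p : Fin 3 × Fin 3, |pdi p.1 (pdi p.2 k) t x y|)) := by
  refine ⟨2 * ‖quarticForm g‖ + 1, by positivity, fun f h k t x y _ _ hk hxy => ?_⟩
  have null : quarticForm g (nullCovector x y) (nullCovector x y)
      (tensorSquare (nullCovector x y)) = 0 := by
    simpa only [quarticForm_apply, tensorSquare, mul_assoc] using
      hnull _ (isNullCovector_nullCovector hxy)
  have bound := (norm_trilinear_partials_le_of_null f h hk hxy null).trans
    (mul_le_mul_of_nonneg_right (lt_add_one _).le (by positivity))
  simpa only [quarticForm_apply, pi_norm_eq_iSup_norm, Real.norm_eq_abs, partials, secondPartials,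
    goodPartials, goodSecondPartials] using bound

/-- **Second null condition pointwise estimate** (Lemma 3.2, (3.5)): if the quartic form
`Σ g_{ij}^{kl} p_i p_j p_k p_l` vanishes on the null cone, then
`|Σ g_{ij}^{kl} ∂_i f ∂_j g ∂²_{kl} h| ≤ C(|∂f||∂g||Z∂h| + |∂f||Zg||∂²h| + |Zf||∂g||∂²h|)`. -/
theorem null_form_estimate_quartic (g : Fin 3 → Fin 3 → Fin 3 → Fin 3 → ℝ)
    (hsym1 : ∀ i j k l, g i j k l = g i j l k)
    (hsym2 : ∀ i j k l, g i j k l = g j i k l)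
    (hnull : ∀ p : Fin 3 → ℝ, (p 0) ^ 2 = (p 1) ^ 2 + (p 2) ^ 2 →
      ∑ i, ∑ j, ∑ k, ∑ l, g i j k l * p i * p j * p k * p l = 0) :
    ∃ C > 0, ∀ T : ℝ, 0 < T → ∀ f h k : F3, Smooth3 f → Smooth3 h → Smooth3 k →
      ∀ t x y : ℝ, t ∈ Icc (0 : ℝ) T → (x, y) ≠ ((0 : ℝ), (0 : ℝ)) →
        |∑ i, ∑ j, ∑ k', ∑ l,
            g i j k' l * pdi i f t x y * pdi j h t x y * pdi k' (pdi l k) t x y| ≤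
          C * ((⨆ i : Fin 3, |pdi i f t x y|) * (⨆ i : Fin 3, |pdi i h t x y|) *
                (⨆ p : Fin 2 × Fin 3, |Zi p.1 (pdi p.2 k) t x y|)
            + (⨆ i : Fin 3, |pdi i f t x y|) * (⨆ i : Fin 2, |Zi i h t x y|) *
                (⨆ p : Fin 3 × Fin 3, |pdi p.1 (pdi p.2 k) t x y|)
            + (⨆ i : Fin 2, |Zi i f t x y|) * (⨆ i : Fin 3, |pdi i h t x y|) *
                (⨆ p : Fin 3 × Fin 3, |pdi p.1 (pdi p.2 k) t x y|)) := by
  obtain ⟨C, C_pos, bound⟩ := null_form_estimate_quartic_general g hnull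
  exact ⟨C, C_pos, fun T _ f h k hf hh hk t x y _ hxy => bound f h k t x y
    (hf.differentiable (by simp) _) (hh.differentiable (by simp) _)
    (contDiff_infty.1 hk 2).contDiffAt hxy⟩

end
end

section
/- Fix M > 0. There exists a constant C > 0, independent of t, such that for every g ∈ C²([0,∞)×ℝ²) with supp g(t,·) ⊂ {x : |x| ≤ M + t} for each t, every t ≥ 0, and every x with |x| ≥ M+1: σ(x)^{1/2} |g(t,x)| ≤ C Σ_{j=0}^{1} Σ_{|α|=0}^{2−j} ‖∇^α Ω^j g(t,·)‖_{L²({|x| ≥ M+1})}. -/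
/-!
Fix the time and write `φ = g(t,·)`. In polar coordinates `(ρ, θ)` the field `Ω` is `∂_θ`, so the
one-dimensional Sobolev inequality on `[-π, π]` bounds `φ(x)²` by twice the integral of
`φ² + (Ωφ)²` over the circle of radius `r = |x|`. On each ray the one-dimensional Sobolev inequality
on the half-line, together with `r ≤ ρ`, gives `r φ(r,θ)² ≤ ∫_r^∞ (φ² + |∇φ|²) ρ dρ`, and `ρ dρ dθ`
is the area element. Applying the latter to both `φ` and `Ωφ` bounds `r φ(x)²` by twice the `H¹`
energies of `φ` and `Ωφ` over `{|q| > r}`; finally `1 + r ≤ 2r` as soon as `r ≥ 1`.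
-/

noncomputable section

open Real MeasureTheory Set

/-- The `L²(ℝ²)` norm. -/
def L2n (g : ℝ → ℝ → ℝ) : ℝ := Real.sqrt (∫ q : ℝ × ℝ, (g q.1 q.2) ^ 2)

/-- The `L²` norm over a region `S ⊆ ℝ²`. -/
def L2nS (S : Set (ℝ × ℝ)) (g : ℝ → ℝ → ℝ) : ℝ := Real.sqrt (∫ q in S, (g q.1 q.2) ^ 2)

/-- The exterior region `{x : |x| ≥ M + 1}`. -/
def regOut (M : ℝ) : Set (ℝ × ℝ) := {q | M + 1 ≤ rad q.1 q.2}

/-- The spatial derivatives `∇ = (∂₁, ∂₂)`. -/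
def spi : Fin 2 → F3 → F3 := ![px, py]

/-- Iterated spatial derivative `∇^α`. -/
def SIter : List (Fin 2) → F3 → F3
  | [], f => f
  | a :: l, f => spi a (SIter l f)

open Filter Topology ENNReal Function

section OneDimensional

variable {f : ℝ → ℝ} {a b r x : ℝ}

lemma abs_two_mul_mul_le_add_sq (u v : ℝ) : |2 * u * v| ≤ u ^ 2 + v ^ 2 := by
  rw [abs_le]
  constructor <;> nlinarith [sq_nonneg (u + v), sq_nonneg (u - v)]

lemma continuous_sq_add_deriv_sq (hf : ContDiff ℝ 1 f) :
    Continuous fun s => f s ^ 2 + deriv f s ^ 2 :=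
  (hf.continuous.pow 2).add (hf.continuous_deriv_one.pow 2)

lemma sq_sub_sq_le_abs_integral (hf : ContDiff ℝ 1 f) (c x : ℝ) :
    f x ^ 2 - f c ^ 2 ≤ |∫ s in c..x, (f s ^ 2 + deriv f s ^ 2)| := by
  have hcont : Continuous fun s => 2 * f s * deriv f s :=
    (continuous_const.mul hf.continuous).mul hf.continuous_deriv_one
  have hderiv (s : ℝ) : HasDerivAt (fun s => f s ^ 2) (2 * f s * deriv f s) s := by
    simpa using! (hf.differentiable_one s).hasDerivAt.pow 2
  calc f x ^ 2 - f c ^ 2 = ∫ s in c..x, 2 * f s * deriv f s :=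
        (intervalIntegral.integral_eq_sub_of_hasDerivAt (fun s _ => hderiv s)
          (hcont.intervalIntegrable _ _)).symm
    _ ≤ |∫ s in c..x, 2 * f s * deriv f s| := le_abs_self _
    _ ≤ |∫ s in c..x, (f s ^ 2 + deriv f s ^ 2)| :=
        intervalIntegral.norm_integral_le_abs_of_norm_le (f := fun s => 2 * f s * deriv f s)
          (Eventually.of_forall fun s => abs_two_mul_mul_le_add_sq (f s) (deriv f s))
          ((continuous_sq_add_deriv_sq hf).intervalIntegrable _ _)

-- Start the integration at a point where `f ^ 2` takes its mean value over `[a, b]`.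
lemma sq_le_mul_integral_sq_add_deriv_sq (hf : ContDiff ℝ 1 f) (hab : a < b) (hx : x ∈ Icc a b) :
    f x ^ 2 ≤ (1 + (b - a)⁻¹) * ∫ s in a..b, (f s ^ 2 + deriv f s ^ 2) := by
  have hcont := continuous_sq_add_deriv_sq hf
  obtain ⟨c, hc, hmean⟩ :=
    exists_eq_interval_average (f := fun s => f s ^ 2) hab.ne
      (hf.continuous.pow 2).continuousOn
  rw [interval_average_eq, smul_eq_mul] at hmean
  rw [uIoo_of_le hab.le] at hc
  have hmass : ∫ s in a..b, f s ^ 2 ≤ ∫ s in a..b, (f s ^ 2 + deriv f s ^ 2) :=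
    intervalIntegral.integral_mono_on hab.le ((hf.continuous.pow 2).intervalIntegrable _ _)
      (hcont.intervalIntegrable _ _) fun s _ => le_add_of_nonneg_right (sq_nonneg _)
  have hvariation : |∫ s in c..x, (f s ^ 2 + deriv f s ^ 2)|
      ≤ ∫ s in a..b, (f s ^ 2 + deriv f s ^ 2) := by
    rw [← abs_of_nonneg (intervalIntegral.integral_nonneg hab.le fun s _ =>
      add_nonneg (sq_nonneg (f s)) (sq_nonneg (deriv f s)))]
    refine intervalIntegral.abs_integral_mono_interval ?_
      (Eventually.of_forall fun s => add_nonneg (sq_nonneg _) (sq_nonneg _))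
      (hcont.intervalIntegrable _ _)
    rw [uIoc_of_le hab.le]
    exact Ioc_subset_Ioc (le_min hc.1.le hx.1) (max_le hc.2.le hx.2)
  calc f x ^ 2 ≤ f c ^ 2 + |∫ s in c..x, (f s ^ 2 + deriv f s ^ 2)| := by
        linarith [sq_sub_sq_le_abs_integral hf c x]
    _ ≤ (b - a)⁻¹ * (∫ s in a..b, (f s ^ 2 + deriv f s ^ 2))
          + ∫ s in a..b, (f s ^ 2 + deriv f s ^ 2) := by
        rw [hmean]
        have := sub_pos.2 hab
        gcongr
    _ = (1 + (b - a)⁻¹) * ∫ s in a..b, (f s ^ 2 + deriv f s ^ 2) := by ring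

lemma ofReal_sq_le_mul_lintegral_Ioc (hf : ContDiff ℝ 1 f) (hab : a < b) (hx : x ∈ Icc a b) :
    ENNReal.ofReal (f x ^ 2) ≤ (1 + ENNReal.ofReal (b - a)⁻¹)
      * ∫⁻ s in Ioc a b, ENNReal.ofReal (f s ^ 2 + deriv f s ^ 2) := by
  have hlength : 0 ≤ (b - a)⁻¹ := inv_nonneg.2 (sub_nonneg.2 hab.le)
  rw [← ofReal_integral_eq_lintegral_ofReal (continuous_sq_add_deriv_sq hf).integrableOn_Ioc
      (Eventually.of_forall fun s => add_nonneg (sq_nonneg _) (sq_nonneg _)),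
    ← intervalIntegral.integral_of_le hab.le, ← ENNReal.ofReal_one,
    ← ENNReal.ofReal_add zero_le_one hlength, ← ENNReal.ofReal_mul (by positivity)]
  exact ENNReal.ofReal_le_ofReal (sq_le_mul_integral_sq_add_deriv_sq hf hab hx)

-- Let the length of the interval tend to infinity in the previous lemma.
lemma ofReal_sq_le_lintegral_Ioi (hf : ContDiff ℝ 1 f) :
    ENNReal.ofReal (f r ^ 2) ≤ ∫⁻ s in Ioi r, ENNReal.ofReal (f s ^ 2 + deriv f s ^ 2) := by
  set E := ∫⁻ s in Ioi r, ENNReal.ofReal (f s ^ 2 + deriv f s ^ 2)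
  have hbound : ∀ᶠ L : ℝ in atTop,
      ENNReal.ofReal (f r ^ 2) ≤ (1 + ENNReal.ofReal L⁻¹) * E := by
    filter_upwards [eventually_gt_atTop 0] with L hL
    have hle : r < r + L := lt_add_of_pos_right r hL
    have := ofReal_sq_le_mul_lintegral_Ioc hf hle (left_mem_Icc.2 hle.le)
    rw [add_sub_cancel_left] at this
    exact this.trans (mul_le_mul_right (lintegral_mono_set Ioc_subset_Ioi_self) _)
  have hlim : Tendsto (fun L : ℝ => (1 + ENNReal.ofReal L⁻¹) * E) atTop (𝓝 ((1 + 0) * E)) := by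
    refine ENNReal.Tendsto.mul_const (tendsto_const_nhds.add ?_) (Or.inl (by simp))
    simpa using ENNReal.tendsto_ofReal (tendsto_inv_atTop_zero (𝕜 := ℝ))
  simpa using ge_of_tendsto hlim hbound

lemma ofReal_mul_sq_le_lintegral_Ioi (hf : ContDiff ℝ 1 f) :
    ENNReal.ofReal r * ENNReal.ofReal (f r ^ 2)
      ≤ ∫⁻ s in Ioi r, ENNReal.ofReal s * ENNReal.ofReal (f s ^ 2 + deriv f s ^ 2) := by
  calc ENNReal.ofReal r * ENNReal.ofReal (f r ^ 2)
      ≤ ENNReal.ofReal r * ∫⁻ s in Ioi r, ENNReal.ofReal (f s ^ 2 + deriv f s ^ 2) := by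
        gcongr
        exact ofReal_sq_le_lintegral_Ioi hf
    _ = ∫⁻ s in Ioi r, ENNReal.ofReal r * ENNReal.ofReal (f s ^ 2 + deriv f s ^ 2) :=
        (lintegral_const_mul' _ _ ENNReal.ofReal_ne_top).symm
    _ ≤ ∫⁻ s in Ioi r, ENNReal.ofReal s * ENNReal.ofReal (f s ^ 2 + deriv f s ^ 2) :=
        setLIntegral_mono' measurableSet_Ioi fun s hs => by
          gcongr
          exact (mem_Ioi.1 hs).le

end OneDimensional

section PolarCoordinates

lemma continuous_rad : Continuous fun q : ℝ × ℝ => rad q.1 q.2 := by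
  unfold rad
  fun_prop

lemma rad_polarCoord_symm {p : ℝ × ℝ} (hp : 0 ≤ p.1) :
    rad (polarCoord.symm p).1 (polarCoord.symm p).2 = p.1 := by
  have hsq : (p.1 * cos p.2) ^ 2 + (p.1 * sin p.2) ^ 2 = p.1 ^ 2 := by
    linear_combination p.1 ^ 2 * sin_sq_add_cos_sq p.2
  simp only [rad, polarCoord_symm_apply, hsq, Real.sqrt_sq hp]

lemma exists_polarCoord_symm_eq (q : ℝ × ℝ) :
    ∃ θ ∈ Icc (-π) π, polarCoord.symm (rad q.1 q.2, θ) = q := by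
  set z : ℂ := ⟨q.1, q.2⟩
  have hz : rad q.1 q.2 = ‖z‖ := by
    simp only [rad, z, Complex.norm_def, Complex.normSq_mk, sq]
  refine ⟨z.arg, ⟨(Complex.neg_pi_lt_arg z).le, Complex.arg_le_pi z⟩, ?_⟩
  rw [polarCoord_symm_apply, hz, Complex.norm_mul_cos_arg, Complex.norm_mul_sin_arg]

lemma setLIntegral_lt_rad_eq_lintegral_polar {F : ℝ × ℝ → ℝ≥0∞} (hF : Measurable F) {r : ℝ}
    (hr : 0 ≤ r) :
    ∫⁻ q in {q | r < rad q.1 q.2}, F q = ∫⁻ θ in Ioo (-π) π, ∫⁻ ρ in Ioi r,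
      ENNReal.ofReal ρ * F (polarCoord.symm (ρ, θ)) := by
  have hexterior : MeasurableSet {q : ℝ × ℝ | r < rad q.1 q.2} :=
    measurableSet_lt measurable_const continuous_rad.measurable
  have hpolar : (Ioi r ×ˢ univ) ∩ polarCoord.target = Ioi r ×ˢ Ioo (-π) π := by
    rw [polarCoord_target, prod_inter_prod, univ_inter, inter_eq_left.2 (Ioi_subset_Ioi hr)]
  calc ∫⁻ q in {q | r < rad q.1 q.2}, F q
      = ∫⁻ p in polarCoord.target, ENNReal.ofReal p.1
          • {q | r < rad q.1 q.2}.indicator F (polarCoord.symm p) := by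
        rw [lintegral_comp_polarCoord_symm, lintegral_indicator hexterior]
    _ = ∫⁻ p in polarCoord.target, (Ioi r ×ˢ univ).indicator
          (fun p => ENNReal.ofReal p.1 * F (polarCoord.symm p)) p := by
        refine setLIntegral_congr_fun polarCoord.open_target.measurableSet fun p hp => ?_
        simp [indicator_apply, rad_polarCoord_symm (mem_Ioi.1 hp.1).le,
          -polarCoord_symm_apply]
    _ = ∫⁻ p in Ioi r ×ˢ Ioo (-π) π, ENNReal.ofReal p.1 * F (polarCoord.symm p) := by
        rw [setLIntegral_indicator (measurableSet_Ioi.prod .univ), hpolar]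
    _ = _ := setLIntegral_prod_symm _ (Measurable.aemeasurable
        (measurable_fst.ennreal_ofReal.mul (hF.comp continuous_polarCoord_symm.measurable)))

end PolarCoordinates

section Planar

variable {φ : ℝ × ℝ → ℝ} {r : ℝ}

/-- The first-order energy density `φ² + |∇φ|²`, with `|∇φ|` the Euclidean norm although
`ℝ × ℝ` carries the sup norm. -/
def energyDensity (φ : ℝ × ℝ → ℝ) (q : ℝ × ℝ) : ℝ :=
  φ q ^ 2 + (fderiv ℝ φ q (1, 0) ^ 2 + fderiv ℝ φ q (0, 1) ^ 2)

/-- The rotation field `Ω = x₁∂₂ − x₂∂₁` applied to a function of the space variables alone; it is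
the derivative in the polar angle. -/
def angularDeriv (φ : ℝ × ℝ → ℝ) (q : ℝ × ℝ) : ℝ :=
  q.1 * fderiv ℝ φ q (0, 1) - q.2 * fderiv ℝ φ q (1, 0)

lemma clm_apply_prod_eq (L : ℝ × ℝ →L[ℝ] ℝ) (a b : ℝ) :
    L (a, b) = a * L (1, 0) + b * L (0, 1) := by
  rw [← smul_eq_mul, ← smul_eq_mul, ← map_smul, ← map_smul, ← map_add]
  simp

lemma sq_clm_apply_prod_le (L : ℝ × ℝ →L[ℝ] ℝ) (a b : ℝ) :
    L (a, b) ^ 2 ≤ (a ^ 2 + b ^ 2) * (L (1, 0) ^ 2 + L (0, 1) ^ 2) := by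
  rw [clm_apply_prod_eq]
  nlinarith [sq_nonneg (a * L (0, 1) - b * L (1, 0))]

lemma continuous_energyDensity (hφ : ContDiff ℝ 1 φ) : Continuous (energyDensity φ) :=
  have hφ₁ := hφ.continuous_fderiv one_ne_zero
  (hφ.continuous.pow 2).add (((hφ₁.clm_apply continuous_const).pow 2).add
    ((hφ₁.clm_apply continuous_const).pow 2))

lemma contDiff_angularDeriv {n : WithTop ℕ∞} (hφ : ContDiff ℝ (n + 1) φ) :
    ContDiff ℝ n (angularDeriv φ) := by
  have : ContDiff ℝ n (fderiv ℝ φ) := hφ.fderiv_right le_rfl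
  unfold angularDeriv
  fun_prop

lemma contDiff_polarCoord_symm {n : WithTop ℕ∞} : ContDiff ℝ n polarCoord.symm := by
  change ContDiff ℝ n fun p : ℝ × ℝ => (p.1 * cos p.2, p.1 * sin p.2)
  fun_prop

lemma hasDerivAt_radial (hφ : Differentiable ℝ φ) (ρ θ : ℝ) :
    HasDerivAt (fun ρ => φ (polarCoord.symm (ρ, θ)))
      (fderiv ℝ φ (polarCoord.symm (ρ, θ)) (cos θ, sin θ)) ρ :=
  (hφ _).hasFDerivAt.comp_hasDerivAt (f := fun ρ => polarCoord.symm (ρ, θ)) ρ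
    ((hasDerivAt_mul_const (cos θ)).prodMk (hasDerivAt_mul_const (sin θ)))

lemma hasDerivAt_angular (hφ : Differentiable ℝ φ) (ρ θ : ℝ) :
    HasDerivAt (fun θ => φ (polarCoord.symm (ρ, θ)))
      (angularDeriv φ (polarCoord.symm (ρ, θ))) θ := by
  have hcircle : HasDerivAt (fun θ => polarCoord.symm (ρ, θ)) (ρ * -sin θ, ρ * cos θ) θ :=
    ((hasDerivAt_cos θ).const_mul ρ).prodMk ((hasDerivAt_sin θ).const_mul ρ)
  refine ((hφ _).hasFDerivAt.comp_hasDerivAt θ hcircle).congr_deriv ?_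
  rw [clm_apply_prod_eq, angularDeriv]
  simp only [polarCoord_symm_apply]
  ring

lemma sq_add_deriv_radial_sq_le_energyDensity (hφ : Differentiable ℝ φ) (ρ θ : ℝ) :
    φ (polarCoord.symm (ρ, θ)) ^ 2 + deriv (fun ρ => φ (polarCoord.symm (ρ, θ))) ρ ^ 2
      ≤ energyDensity φ (polarCoord.symm (ρ, θ)) := by
  rw [(hasDerivAt_radial hφ ρ θ).deriv, energyDensity]
  gcongr
  simpa [-polarCoord_symm_apply] using
    sq_clm_apply_prod_le (fderiv ℝ φ (polarCoord.symm (ρ, θ))) (cos θ) (sin θ)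

lemma ofReal_mul_lintegral_circle_le (hφ : ContDiff ℝ 1 φ) (hr : 0 ≤ r) :
    ENNReal.ofReal r * ∫⁻ θ in Ioo (-π) π, ENNReal.ofReal (φ (polarCoord.symm (r, θ)) ^ 2)
      ≤ ∫⁻ q in {q | r < rad q.1 q.2}, ENNReal.ofReal (energyDensity φ q) := by
  rw [setLIntegral_lt_rad_eq_lintegral_polar
      (continuous_energyDensity hφ).measurable.ennreal_ofReal hr,
    ← lintegral_const_mul' _ _ ENNReal.ofReal_ne_top]
  refine lintegral_mono fun θ => ?_
  have hray : ContDiff ℝ 1 fun ρ => φ (polarCoord.symm (ρ, θ)) :=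
    hφ.comp (contDiff_polarCoord_symm.comp (contDiff_id.prodMk contDiff_const))
  refine (ofReal_mul_sq_le_lintegral_Ioi hray).trans (lintegral_mono fun ρ => ?_)
  gcongr
  exact sq_add_deriv_radial_sq_le_energyDensity hφ.differentiable_one ρ θ

lemma ofReal_sq_le_two_mul_lintegral_circle (hφ : ContDiff ℝ 1 φ) (q : ℝ × ℝ) :
    ENNReal.ofReal (φ q ^ 2) ≤ 2 * ∫⁻ θ in Ioo (-π) π,
      ENNReal.ofReal (φ (polarCoord.symm (rad q.1 q.2, θ)) ^ 2
        + angularDeriv φ (polarCoord.symm (rad q.1 q.2, θ)) ^ 2) := by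
  obtain ⟨θ₀, hθ₀, hq⟩ := exists_polarCoord_symm_eq q
  have hcircle : ContDiff ℝ 1 fun θ => φ (polarCoord.symm (rad q.1 q.2, θ)) :=
    hφ.comp (contDiff_polarCoord_symm.comp (contDiff_const.prodMk contDiff_id))
  have hperiod : (1 : ℝ≥0∞) + ENNReal.ofReal (π - -π)⁻¹ ≤ 2 := by
    have : ENNReal.ofReal (π - -π)⁻¹ ≤ 1 :=
      ENNReal.ofReal_le_one.2 (inv_le_one_of_one_le₀ (by linarith [pi_gt_three]))
    calc (1 : ℝ≥0∞) + ENNReal.ofReal (π - -π)⁻¹ ≤ 1 + 1 := by gcongr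
      _ = 2 := one_add_one_eq_two
  have hsobolev := ofReal_sq_le_mul_lintegral_Ioc hcircle (neg_lt_self pi_pos) hθ₀
  simp only [hq, (hasDerivAt_angular hφ.differentiable_one _ _).deriv] at hsobolev
  rw [restrict_Ioo_eq_restrict_Ioc]
  exact hsobolev.trans (mul_le_mul_left hperiod _)

lemma ofReal_rad_mul_sq_le (hφ : ContDiff ℝ 2 φ) (q : ℝ × ℝ) :
    ENNReal.ofReal (rad q.1 q.2 * φ q ^ 2) ≤
      2 * ((∫⁻ p in {p | rad q.1 q.2 < rad p.1 p.2}, ENNReal.ofReal (energyDensity φ p))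
        + ∫⁻ p in {p | rad q.1 q.2 < rad p.1 p.2},
            ENNReal.ofReal (energyDensity (angularDeriv φ) p)) := by
  have hφ₁ : ContDiff ℝ 1 φ := hφ.of_le one_le_two
  have hΩφ : ContDiff ℝ 1 (angularDeriv φ) :=
    contDiff_angularDeriv (by rwa [one_add_one_eq_two])
  have hrad : 0 ≤ rad q.1 q.2 := Real.sqrt_nonneg _
  have hmeas : Measurable fun θ => ENNReal.ofReal (φ (polarCoord.symm (rad q.1 q.2, θ)) ^ 2) := by
    have := hφ.continuous
    fun_prop
  calc ENNReal.ofReal (rad q.1 q.2 * φ q ^ 2)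
      ≤ ENNReal.ofReal (rad q.1 q.2) * (2 * ∫⁻ θ in Ioo (-π) π,
          ENNReal.ofReal (φ (polarCoord.symm (rad q.1 q.2, θ)) ^ 2
            + angularDeriv φ (polarCoord.symm (rad q.1 q.2, θ)) ^ 2)) := by
        rw [ENNReal.ofReal_mul hrad]
        gcongr
        exact ofReal_sq_le_two_mul_lintegral_circle hφ₁ q
    _ = 2 * (ENNReal.ofReal (rad q.1 q.2)
            * (∫⁻ θ in Ioo (-π) π, ENNReal.ofReal (φ (polarCoord.symm (rad q.1 q.2, θ)) ^ 2))
          + ENNReal.ofReal (rad q.1 q.2) * ∫⁻ θ in Ioo (-π) π,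
              ENNReal.ofReal (angularDeriv φ (polarCoord.symm (rad q.1 q.2, θ)) ^ 2)) := by
        simp only [ENNReal.ofReal_add (sq_nonneg _) (sq_nonneg _)]
        rw [lintegral_add_left hmeas]
        ring
    _ ≤ _ := by
        gcongr
        · exact ofReal_mul_lintegral_circle_le hφ₁ hrad
        · exact ofReal_mul_lintegral_circle_le hΩφ hrad

end Planar

section SpatialDerivatives

variable {f : F3} {t : ℝ} {n : WithTop ℕ∞}

lemma uncurry_px (hf : Differentiable ℝ (uncurry (f t))) :
    uncurry (px f t) = fun q => fderiv ℝ (uncurry (f t)) q (1, 0) := by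
  ext ⟨x, y⟩
  exact ((hf (x, y)).hasFDerivAt.comp_hasDerivAt x
    ((hasDerivAt_id x).prodMk (hasDerivAt_const x y))).deriv

lemma uncurry_py (hf : Differentiable ℝ (uncurry (f t))) :
    uncurry (py f t) = fun q => fderiv ℝ (uncurry (f t)) q (0, 1) := by
  ext ⟨x, y⟩
  exact ((hf (x, y)).hasFDerivAt.comp_hasDerivAt y
    ((hasDerivAt_const y x).prodMk (hasDerivAt_id y))).deriv

lemma uncurry_Om (hf : Differentiable ℝ (uncurry (f t))) :
    uncurry (Om f t) = angularDeriv (uncurry (f t)) := by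
  ext q
  simp only [angularDeriv, ← congrFun (uncurry_px hf) q, ← congrFun (uncurry_py hf) q]
  rfl

lemma contDiff_uncurry_spi (i : Fin 2) (hf : ContDiff ℝ (n + 1) (uncurry (f t))) :
    ContDiff ℝ n (uncurry (spi i f t)) := by
  have hdiff : Differentiable ℝ (uncurry (f t)) := hf.differentiable (by simp)
  have hfderiv : ContDiff ℝ n (fderiv ℝ (uncurry (f t))) := hf.fderiv_right le_rfl
  fin_cases i
  · simpa only [spi, Fin.zero_eta, Matrix.cons_val_zero, uncurry_px hdiff] using
      hfderiv.clm_apply contDiff_const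
  · simpa only [spi, Fin.mk_one, Matrix.cons_val_one, Matrix.cons_val_zero, uncurry_py hdiff] using
      hfderiv.clm_apply contDiff_const

lemma contDiff_uncurry_SIter (w : List (Fin 2))
    (hf : ContDiff ℝ (n + w.length) (uncurry (f t))) : ContDiff ℝ n (uncurry (SIter w f t)) := by
  induction w generalizing n with
  | nil => simpa using! hf
  | cons i w ih =>
    refine contDiff_uncurry_spi i (ih ?_)
    rwa [List.length_cons, Nat.cast_add_one, add_comm (w.length : WithTop ℕ∞), ← add_assoc] at hf

lemma contDiff_uncurry_Om_iterate (j : ℕ) (hf : ContDiff ℝ (n + j) (uncurry (f t))) :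
    ContDiff ℝ n (uncurry (Om^[j] f t)) := by
  induction j generalizing n with
  | zero => simpa using hf
  | succ j ih =>
    rw [Nat.cast_add_one, add_comm (j : WithTop ℕ∞), ← add_assoc] at hf
    rw [iterate_succ_apply', uncurry_Om ((ih hf).differentiable (by simp))]
    exact contDiff_angularDeriv (ih hf)

lemma hasCompactSupport_uncurry_px (hf : HasCompactSupport (uncurry (f t))) :
    HasCompactSupport (uncurry (px f t)) := by
  refine hf.mono' fun q => not_imp_not.1 fun hq => notMem_support.2 ?_
  have hvanish : uncurry (f t) =ᶠ[𝓝 (q.1, q.2)] 0 := notMem_tsupport_iff_eventuallyEq.1 hq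
  have hline : (fun s => f t s q.2) =ᶠ[𝓝 q.1] fun _ => 0 :=
    (Continuous.prodMk_left q.2).continuousAt.eventually hvanish
  exact hline.deriv_eq.trans (deriv_const _ _)

lemma hasCompactSupport_uncurry_py (hf : HasCompactSupport (uncurry (f t))) :
    HasCompactSupport (uncurry (py f t)) := by
  refine hf.mono' fun q => not_imp_not.1 fun hq => notMem_support.2 ?_
  have hvanish : uncurry (f t) =ᶠ[𝓝 (q.1, q.2)] 0 := notMem_tsupport_iff_eventuallyEq.1 hq
  have hline : (fun s => f t q.1 s) =ᶠ[𝓝 q.2] fun _ => 0 :=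
    (Continuous.prodMk_right q.1).continuousAt.eventually hvanish
  exact hline.deriv_eq.trans (deriv_const _ _)

lemma hasCompactSupport_uncurry_SIter (w : List (Fin 2)) (hf : HasCompactSupport (uncurry (f t))) :
    HasCompactSupport (uncurry (SIter w f t)) := by
  induction w with
  | nil => exact hf
  | cons i w ih =>
    fin_cases i
    · exact hasCompactSupport_uncurry_px ih
    · exact hasCompactSupport_uncurry_py ih

lemma hasCompactSupport_uncurry_Om_iterate (j : ℕ) (hf : HasCompactSupport (uncurry (f t))) :
    HasCompactSupport (uncurry (Om^[j] f t)) := by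
  induction j with
  | zero => exact hf
  | succ j ih =>
    rw [iterate_succ_apply']
    exact (hasCompactSupport_uncurry_py ih).mul_left.sub (hasCompactSupport_uncurry_px ih).mul_left

lemma memLp_uncurry_SIter_Om_iterate {p : ℝ≥0∞} {μ : Measure (ℝ × ℝ)}
    [IsFiniteMeasureOnCompacts μ] {k j : ℕ} {w : List (Fin 2)}
    (hk : w.length + j ≤ k) (hf : ContDiff ℝ k (uncurry (f t)))
    (hsupp : HasCompactSupport (uncurry (f t))) :
    MemLp (uncurry (SIter w (Om^[j] f) t)) p μ := by
  have hcont : ContDiff ℝ 0 (uncurry (SIter w (Om^[j] f) t)) := by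
    refine contDiff_uncurry_SIter w (contDiff_uncurry_Om_iterate j ?_)
    rw [zero_add, ← Nat.cast_add]
    exact hf.of_le (mod_cast hk)
  exact hcont.continuous.memLp_of_hasCompactSupport
    (hasCompactSupport_uncurry_SIter w (hasCompactSupport_uncurry_Om_iterate j hsupp))

lemma norm_le_rad (q : ℝ × ℝ) : ‖q‖ ≤ rad q.1 q.2 :=
  max_le (Real.abs_le_sqrt (le_add_of_nonneg_right (sq_nonneg q.2)))
    (Real.abs_le_sqrt (le_add_of_nonneg_left (sq_nonneg q.1)))

lemma hasCompactSupport_uncurry_of_rad {u : ℝ → ℝ → ℝ} {R : ℝ}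
    (hu : ∀ x y, R ≤ rad x y → u x y = 0) : HasCompactSupport (uncurry u) := by
  refine HasCompactSupport.intro (isCompact_closedBall (0 : ℝ × ℝ) R) fun q hq => ?_
  rw [mem_closedBall_zero_iff, not_le] at hq
  exact hu q.1 q.2 (hq.le.trans (norm_le_rad q))

end SpatialDerivatives

section Norms

variable {S : Set (ℝ × ℝ)} {f g : F3} {t : ℝ}

lemma L2nS_nonneg (S : Set (ℝ × ℝ)) (u : ℝ → ℝ → ℝ) : 0 ≤ L2nS S u := Real.sqrt_nonneg _

lemma L2nS_sq (S : Set (ℝ × ℝ)) (u : ℝ → ℝ → ℝ) :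
    L2nS S u ^ 2 = ∫ q in S, uncurry u q ^ 2 :=
  Real.sq_sqrt (integral_nonneg fun _ => sq_nonneg _)

/-- The norm of `f(t,·)` in the Sobolev space `H¹(S)`, encoded as the sum of the `L²(S)` norms of
its spatial derivatives of order at most one. -/
def H1nS (S : Set (ℝ × ℝ)) (f : F3) (t : ℝ) : ℝ :=
  ∑ a ∈ Finset.range 2, ∑ w : Fin a → Fin 2, L2nS S (SIter (List.ofFn w) f t)

lemma H1nS_nonneg (S : Set (ℝ × ℝ)) (f : F3) (t : ℝ) : 0 ≤ H1nS S f t :=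
  Finset.sum_nonneg fun _ _ => Finset.sum_nonneg fun _ _ => L2nS_nonneg _ _

lemma H1nS_eq (S : Set (ℝ × ℝ)) (f : F3) (t : ℝ) :
    H1nS S f t = L2nS S (f t) + (L2nS S (px f t) + L2nS S (py f t)) := by
  have hunary : ∑ w : Fin 1 → Fin 2, L2nS S (SIter (List.ofFn w) f t)
      = L2nS S (px f t) + L2nS S (py f t) := by
    rw [← (Equiv.funUnique (Fin 1) (Fin 2)).symm.sum_comp, Fin.sum_univ_two]
    simp [SIter, spi]
  rw [H1nS, Finset.sum_range_succ, Finset.sum_range_one, hunary]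
  simp [SIter]

lemma lintegral_sq_eq_ofReal_L2nS_sq {u : ℝ → ℝ → ℝ}
    (hu : MemLp (uncurry u) 2 (volume.restrict S)) :
    ∫⁻ q in S, ENNReal.ofReal (uncurry u q ^ 2) = ENNReal.ofReal (L2nS S u ^ 2) := by
  rw [L2nS_sq, ofReal_integral_eq_lintegral_ofReal hu.integrable_sq
    (Eventually.of_forall fun _ => sq_nonneg _)]

lemma lintegral_energyDensity_eq (hf : Differentiable ℝ (uncurry (f t)))
    (hL2 : ∀ w : List (Fin 2), w.length ≤ 1 →
      MemLp (uncurry (SIter w f t)) 2 (volume.restrict S)) :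
    ∫⁻ q in S, ENNReal.ofReal (energyDensity (uncurry (f t)) q) =
      ENNReal.ofReal (L2nS S (f t) ^ 2 + (L2nS S (px f t) ^ 2 + L2nS S (py f t) ^ 2)) := by
  have hf₂ : MemLp (uncurry (f t)) 2 (volume.restrict S) := hL2 [] zero_le_one
  have hpx : MemLp (uncurry (px f t)) 2 (volume.restrict S) := hL2 [0] le_rfl
  have hpy : MemLp (uncurry (py f t)) 2 (volume.restrict S) := hL2 [1] le_rfl
  have hdensity (q : ℝ × ℝ) : ENNReal.ofReal (energyDensity (uncurry (f t)) q) =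
      ENNReal.ofReal (uncurry (f t) q ^ 2) + (ENNReal.ofReal (uncurry (px f t) q ^ 2)
        + ENNReal.ofReal (uncurry (py f t) q ^ 2)) := by
    rw [uncurry_px hf, uncurry_py hf, energyDensity, ENNReal.ofReal_add, ENNReal.ofReal_add] <;>
      positivity
  simp only [hdensity]
  rw [lintegral_add_left' hf₂.integrable_sq.aemeasurable.ennreal_ofReal,
    lintegral_add_left' hpx.integrable_sq.aemeasurable.ennreal_ofReal,
    lintegral_sq_eq_ofReal_L2nS_sq hf₂, lintegral_sq_eq_ofReal_L2nS_sq hpx,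
    lintegral_sq_eq_ofReal_L2nS_sq hpy, ENNReal.ofReal_add, ENNReal.ofReal_add] <;>
    positivity

lemma lintegral_energyDensity_le (hf : Differentiable ℝ (uncurry (f t)))
    (hL2 : ∀ w : List (Fin 2), w.length ≤ 1 →
      MemLp (uncurry (SIter w f t)) 2 (volume.restrict S)) :
    ∫⁻ q in S, ENNReal.ofReal (energyDensity (uncurry (f t)) q)
      ≤ ENNReal.ofReal (H1nS S f t ^ 2) := by
  have hpos := L2nS_nonneg S
  rw [lintegral_energyDensity_eq hf hL2, H1nS_eq]
  refine ENNReal.ofReal_le_ofReal ?_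
  calc L2nS S (f t) ^ 2 + (L2nS S (px f t) ^ 2 + L2nS S (py f t) ^ 2)
      ≤ L2nS S (f t) ^ 2 + (L2nS S (px f t) + L2nS S (py f t)) ^ 2 := by
        gcongr
        exact pow_add_pow_le (hpos _) (hpos _) two_ne_zero
    _ ≤ (L2nS S (f t) + (L2nS S (px f t) + L2nS S (py f t))) ^ 2 :=
        pow_add_pow_le (hpos _) (add_nonneg (hpos _) (hpos _)) two_ne_zero

lemma rad_mul_sq_le (hg : ContDiff ℝ 2 (uncurry (g t)))
    (hL2 : ∀ j < 2, ∀ w : List (Fin 2), w.length ≤ 1 →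
      MemLp (uncurry (SIter w (Om^[j] g) t)) 2 (volume.restrict S))
    {x y : ℝ} (hS : {q | rad x y < rad q.1 q.2} ⊆ S) :
    rad x y * g t x y ^ 2 ≤ 2 * (H1nS S g t ^ 2 + H1nS S (Om g) t ^ 2) := by
  have hdiff : Differentiable ℝ (uncurry (g t)) := hg.differentiable two_ne_zero
  have hΩ : ContDiff ℝ 1 (uncurry (Om g t)) :=
    contDiff_uncurry_Om_iterate 1 (by simpa only [Nat.cast_one, one_add_one_eq_two])
  rw [← ENNReal.ofReal_le_ofReal_iff (by positivity), ENNReal.ofReal_mul zero_le_two,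
    ENNReal.ofReal_add (sq_nonneg _) (sq_nonneg _), ENNReal.ofReal_ofNat]
  refine (ofReal_rad_mul_sq_le hg (x, y)).trans ?_
  rw [← uncurry_Om hdiff]
  gcongr
  · exact (lintegral_mono_set hS).trans (lintegral_energyDensity_le hdiff (hL2 0 two_pos))
  · exact (lintegral_mono_set hS).trans
      (lintegral_energyDensity_le hΩ.differentiable_one (hL2 1 one_lt_two))

lemma sum_H1nS_Om_iterate_le (S : Set (ℝ × ℝ)) (g : F3) (t : ℝ) :
    ∑ j ∈ Finset.range 2, H1nS S (Om^[j] g) t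
      ≤ ∑ j ∈ Finset.range 2, ∑ a ∈ Finset.range (3 - j), ∑ w : Fin a → Fin 2,
          L2nS S (SIter (List.ofFn w) (Om^[j] g) t) := by
  refine Finset.sum_le_sum fun j hj => Finset.sum_le_sum_of_subset_of_nonneg ?_
    fun _ _ _ => Finset.sum_nonneg fun _ _ => L2nS_nonneg _ _
  have := Finset.mem_range.1 hj
  exact Finset.range_mono (by lia)

end Norms

theorem pointwise_sobolev_exterior_general {M : ℝ} (hM : 0 ≤ M) {g : F3} {t : ℝ}
    (hg : ContDiff ℝ 2 (uncurry (g t)))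
    (hL2 : ∀ j < 2, ∀ w : List (Fin 2), w.length ≤ 1 →
      MemLp (uncurry (SIter w (Om^[j] g) t)) 2 (volume.restrict (regOut M)))
    {x y : ℝ} (hr : M + 1 ≤ rad x y) :
    √(1 + rad x y) * |g t x y| ≤ 2 * ∑ j ∈ Finset.range 2, H1nS (regOut M) (Om^[j] g) t := by
  have hregion : {q : ℝ × ℝ | rad x y < rad q.1 q.2} ⊆ regOut M := fun q hq => hr.trans hq.le
  have hN := H1nS_nonneg (regOut M)
  have hsum : ∑ j ∈ Finset.range 2, H1nS (regOut M) (Om^[j] g) t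
      = H1nS (regOut M) g t + H1nS (regOut M) (Om g) t := by
    simp [Finset.sum_range_succ]
  rw [hsum]
  refine le_of_sq_le_sq ?_ (mul_nonneg zero_le_two (add_nonneg (hN g t) (hN (Om g) t)))
  calc (√(1 + rad x y) * |g t x y|) ^ 2 = (1 + rad x y) * g t x y ^ 2 := by
        rw [mul_pow, Real.sq_sqrt (by linarith), sq_abs]
    _ ≤ (2 * rad x y) * g t x y ^ 2 := by gcongr; linarith
    _ = 2 * (rad x y * g t x y ^ 2) := mul_assoc _ _ _
    _ ≤ 2 * (2 * (H1nS (regOut M) g t ^ 2 + H1nS (regOut M) (Om g) t ^ 2)) :=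
        mul_le_mul_of_nonneg_left (rad_mul_sq_le hg hL2 hregion) zero_le_two
    _ ≤ (2 * (H1nS (regOut M) g t + H1nS (regOut M) (Om g) t)) ^ 2 := by
        nlinarith [mul_nonneg (hN g t) (hN (Om g) t)]

/-- **Sobolev-type pointwise estimate in the exterior region** ((3.18)):
`σ^{1/2}|g(t,x)| ≤ C Σ_{j=0}^{1} Σ_{|α|≤2−j} ‖∇^αΩ^j g(t,·)‖_{L²(|x|≥M+1)}`. -/
theorem pointwise_sobolev_exterior (M : ℝ) (hM : 0 < M) :
    ∃ C > 0, ∀ g : F3,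
      ContDiff ℝ 2 (fun p : ℝ × ℝ × ℝ => g p.1 p.2.1 p.2.2) →
      (∀ t x y, 0 ≤ t → M + t ≤ rad x y → g t x y = 0) →
      ∀ t x y : ℝ, 0 ≤ t → M + 1 ≤ rad x y →
        Real.sqrt (1 + rad x y) * |g t x y|
          ≤ C * ∑ j ∈ Finset.range 2, ∑ a ∈ Finset.range (3 - j),
              ∑ w : Fin a → Fin 2,
                L2nS (regOut M) (fun u v => SIter (List.ofFn w) ((Om)^[j] g) t u v) := by
  refine ⟨2, two_pos, fun g hg hsupp t x y ht hr => ?_⟩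
  have hslice : ContDiff ℝ 2 (uncurry (g t)) := hg.comp (contDiff_const.prodMk contDiff_id)
  have hcompact := hasCompactSupport_uncurry_of_rad fun u v => hsupp t u v ht
  exact (pointwise_sobolev_exterior_general hM.le hslice
    (fun j hj w hw => memLp_uncurry_SIter_Om_iterate (k := 2) (by lia) hslice hcompact) hr).trans
    (mul_le_mul_of_nonneg_left (sum_H1nS_Om_iterate_le (regOut M) g t) zero_le_two)

end
end
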